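/- arXiv:2204.10462 — 2 statements merged into one kernel-verified Lean document; each statement's English description precedes it below -/
import Mathlib

section
/- For every θ ∈ T^H and every ρ > 0, the value σ*(1/g_m(θ), ρ) = (1 + 2ρ)/(1 + (1 + 1/g_m(θ))ρ), corresponding to the mass-based Braess–Sarazin relaxation, lies in the open interval (8/9, 16/9). -/
open Real Set

/-- The high-frequency set `T^H`. -/
def TH : Set (ℝ × ℝ) :=
  (Ioc (-(π/2)) (3*π/2) ×ˢ Ioc (-(π/2)) (3*π/2)) \
    (Ioc (-(π/2)) (π/2) ×ˢ Ioc (-(π/2)) (π/2))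

/-- Scaled symbol of the five-point discrete Laplacian. -/
noncomputable def chi (θ : ℝ × ℝ) : ℝ := 4 - 2 * Real.cos θ.1 - 2 * Real.cos θ.2

/-- Scaled symbol of the product of the bilinear mass matrix and the discrete Laplacian. -/
noncomputable def gm (θ : ℝ × ℝ) : ℝ :=
  chi θ * (4 + 2 * Real.cos θ.1 + 2 * Real.cos θ.2 + Real.cos θ.1 * Real.cos θ.2) / 9

/-- Third eigenvalue of the preconditioned elasticity symbol, as a function of
`t = η/χ` and `ρ = ε/λ`. -/
noncomputable def sigmaStar (t ρ : ℝ) : ℝ := (1 + 2*ρ) / (1 + (1 + t)*ρ)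

lemma aux_bounds (x y : ℝ) (hx : -1 ≤ x) (hx0 : x ≤ 0) (hy : -1 ≤ y) (hy1 : y ≤ 1) :
    8 / 9 ≤ (4 - 2 * x - 2 * y) * (4 + 2 * x + 2 * y + x * y) / 9 ∧
      (4 - 2 * x - 2 * y) * (4 + 2 * x + 2 * y + x * y) / 9 ≤ 16 / 9 := by
  constructor
  · have h1 : 0 ≤ (1 - y) * ((x + 1) * (2 - x)) :=
      mul_nonneg (by linarith) (mul_nonneg (by linarith) (by linarith))
    have h2 : 0 ≤ (y + 1) * (3 * (2 + x) * (1 - x) - 4) :=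
      mul_nonneg (by linarith) (by nlinarith)
    have h3 : 0 ≤ (2 + x) * ((y + 1) * (1 - y)) :=
      mul_nonneg (by linarith) (mul_nonneg (by linarith) (by linarith))
    nlinarith
  · have h1 : 0 ≤ (x - y) ^ 2 * (2 - x - y) := mul_nonneg (sq_nonneg _) (by linarith)
    have h2 : 0 ≤ (x + y) ^ 2 * (x + y + 6) := mul_nonneg (sq_nonneg _) (by linarith)
    nlinarith

lemma aux_sigma (g ρ : ℝ) (hρ : 0 < ρ) (h1 : 8 / 9 ≤ g) (h2 : g ≤ 16 / 9) :
    sigmaStar (1 / g) ρ ∈ Set.Ioo (8/9 : ℝ) (16/9) := by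
  have hg : 0 < g := by linarith
  have a : 1 / g ≤ 9 / 8 := by rw [div_le_div_iff₀ hg (by norm_num)]; linarith
  have b : 9 / 16 ≤ 1 / g := by rw [div_le_div_iff₀ (by norm_num) hg]; linarith
  unfold sigmaStar
  generalize 1 / g = t at a b
  have c : t * ρ ≤ 9 / 8 * ρ := mul_le_mul_of_nonneg_right a hρ.le
  have d : 9 / 16 * ρ ≤ t * ρ := mul_le_mul_of_nonneg_right b hρ.le
  have e : 0 < 1 + (1 + t) * ρ := by nlinarith
  constructor
  · rw [lt_div_iff₀ e]; nlinarith
  · rw [div_lt_iff₀ e]; nlinarith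

theorem stmt_10 : ∀ θ ∈ TH, ∀ ρ : ℝ, 0 < ρ →
    sigmaStar (1 / gm θ) ρ ∈ Set.Ioo (8/9 : ℝ) (16/9) := by
  rintro ⟨a, b⟩ hθ ρ hρ
  have key : Real.cos a ≤ 0 ∨ Real.cos b ≤ 0 := by
    simp only [TH, Set.mem_diff, Set.mem_prod, Set.mem_Ioc] at hθ
    obtain ⟨⟨⟨a1, a2⟩, b1, b2⟩, h⟩ := hθ
    by_cases ha : a ≤ π / 2
    · right
      have hb : π / 2 < b := by
        by_contra hb
        exact h ⟨⟨a1, ha⟩, b1, not_lt.mp hb⟩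
      exact Real.cos_nonpos_of_pi_div_two_le_of_le hb.le (by linarith)
    · left
      exact Real.cos_nonpos_of_pi_div_two_le_of_le (not_le.mp ha).le (by linarith)
  have hg : 8 / 9 ≤ gm (a, b) ∧ gm (a, b) ≤ 16 / 9 := by
    simp only [gm, chi]
    rcases key with h | h
    · exact aux_bounds _ _ (Real.neg_one_le_cos a) h (Real.neg_one_le_cos b) (Real.cos_le_one b)
    · have := aux_bounds _ _ (Real.neg_one_le_cos b) h (Real.neg_one_le_cos a) (Real.cos_le_one a)
      constructor
      · linarith [this.1]
      · linarith [this.2]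
  exact aux_sigma _ _ hρ hg.1 hg.2
end

section
/- Fix any ρ > 0. For every real damping parameter ω, the supremum over θ ∈ T^H of max{ |1 − ω|, |1 − ω·g_v(θ)|, |1 − ω·σ*(1/g_v(θ), ρ)| } (the spectral radius of the symbol of the Vanka-Braess–Sarazin relaxation error operator) is at least 7/25, and this supremum equals 7/25 if and only if ω = 24/25. In other words, the optimal LFA smoothing factor for the Vanka-Braess–Sarazin relaxation is 7/25, uniquely attained at ω = 24/25, independently of the Lamé constants. -/
open Real Set

/-- Scaled symbol of the product of the element-wise Vanka operator and the discrete Laplacian. -/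
noncomputable def gv (θ : ℝ × ℝ) : ℝ :=
  chi θ * (7 + 2 * Real.cos θ.1 + 2 * Real.cos θ.2 + Real.cos θ.1 * Real.cos θ.2) / 24

lemma poly_lower (x y : ℝ) (hx : -1 ≤ x) (hx0 : x ≤ 0) (hy : -1 ≤ y) (hy1 : y ≤ 1) :
    3/4 ≤ (4 - 2 * x - 2 * y) * (7 + 2 * x + 2 * y + x * y) / 24 := by
  have h1 : 0 ≤ (1 - y) * (14 - 2 * (1 + x)^2) :=
    mul_nonneg (by linarith) (by nlinarith)
  have h2 : 0 ≤ (1 + y) * (6 - 6 * (1 + x)^2) :=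
    mul_nonneg (by linarith) (by nlinarith)
  have h3 : 0 ≤ (2 + 2 * (1 + x)) * ((1 + y) * (1 - y)) :=
    mul_nonneg (by linarith) (mul_nonneg (by linarith) (by linarith))
  nlinarith

lemma poly_upper (x y : ℝ) (hx : -1 ≤ x) (hy : -1 ≤ y) :
    (4 - 2 * x - 2 * y) * (7 + 2 * x + 2 * y + x * y) / 24 ≤ 4/3 := by
  have h3 : 0 ≤ ((1 + x) * (1 + y)) * ((1 + x) + (1 + y)) :=
    mul_nonneg (mul_nonneg (by linarith) (by linarith)) (by linarith)
  nlinarith [sq_nonneg (x - y)]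

lemma cos_nonpos_aux (t : ℝ) (h : t ∈ Ioc (-(π/2)) (3*π/2)) (h' : t ∉ Ioc (-(π/2)) (π/2)) :
    Real.cos t ≤ 0 := by
  have : π/2 < t := by
    by_contra hc
    exact h' ⟨h.1, not_lt.mp hc⟩
  exact Real.cos_nonpos_of_pi_div_two_le_of_le this.le (by linarith [h.2])

lemma gv_bounds (θ : ℝ × ℝ) (h : θ ∈ TH) : 3/4 ≤ gv θ ∧ gv θ ≤ 4/3 := by
  unfold gv chi
  have a1 := Real.neg_one_le_cos θ.1
  have a2 := Real.cos_le_one θ.1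
  have b1 := Real.neg_one_le_cos θ.2
  have b2 := Real.cos_le_one θ.2
  refine ⟨?_, poly_upper _ _ a1 b1⟩
  obtain ⟨⟨h1, h2⟩, h3⟩ := h
  by_cases hc : θ.1 ∈ Ioc (-(π/2)) (π/2)
  · have hc2 : θ.2 ∉ Ioc (-(π/2)) (π/2) := fun h => h3 ⟨hc, h⟩
    have := poly_lower _ _ b1 (cos_nonpos_aux _ h2 hc2) a1 a2
    linarith
  · exact poly_lower _ _ a1 (cos_nonpos_aux _ h1 hc) b1 b2

lemma sigma_bounds (ρ g : ℝ) (hρ : 0 < ρ) (h1 : 3/4 ≤ g) (h2 : g ≤ 4/3) :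
    3/4 ≤ sigmaStar (1 / g) ρ ∧ sigmaStar (1 / g) ρ ≤ 4/3 := by
  unfold sigmaStar
  have hg : 0 < g := by linarith
  have t1 : 1 / g ≤ 4/3 := by rw [div_le_iff₀ hg]; linarith
  have t2 : 3/4 ≤ 1 / g := by rw [le_div_iff₀ hg]; linarith
  generalize 1 / g = t at *
  have hd : 0 < 1 + (1 + t) * ρ := by
    have : 0 ≤ (1 + t) * ρ := mul_nonneg (by linarith) hρ.le
    linarith
  constructor
  · rw [le_div_iff₀ hd]; nlinarith
  · rw [div_le_iff₀ hd]; nlinarith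

lemma mem1 : ((3*π/2, 0) : ℝ × ℝ) ∈ TH := by
  have := Real.pi_pos
  refine ⟨⟨⟨?_, ?_⟩, ⟨?_, ?_⟩⟩, fun h => ?_⟩ <;> try dsimp only
  any_goals linarith
  have := h.1.2
  dsimp only at this
  linarith

lemma mem2 : ((π, π) : ℝ × ℝ) ∈ TH := by
  have := Real.pi_pos
  refine ⟨⟨⟨?_, ?_⟩, ⟨?_, ?_⟩⟩, fun h => ?_⟩ <;> try dsimp only
  any_goals linarith
  have := h.1.2
  dsimp only at this
  linarith

lemma gv1 : gv (3*π/2, 0) = 3/4 := by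
  have : Real.cos (3*π/2) = 0 := by
    rw [show 3*π/2 = π/2 + π by ring, Real.cos_add_pi, Real.cos_pi_div_two, neg_zero]
  simp only [gv, chi, this, Real.cos_zero]
  norm_num

lemma gv2 : gv (π, π) = 4/3 := by
  simp only [gv, chi, Real.cos_pi]
  norm_num

theorem stmt_14 (ρ : ℝ) (hρ : 0 < ρ) (ω : ℝ) :
    7/25 ≤ sSup ((fun θ =>
        max |1 - ω| (max |1 - ω * gv θ| |1 - ω * sigmaStar (1 / gv θ) ρ|)) '' TH) ∧
      (sSup ((fun θ =>
        max |1 - ω| (max |1 - ω * gv θ| |1 - ω * sigmaStar (1 / gv θ) ρ|)) '' TH) = 7/25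
        ↔ ω = 24/25) := by
  set F : ℝ × ℝ → ℝ := fun θ =>
    max |1 - ω| (max |1 - ω * gv θ| |1 - ω * sigmaStar (1 / gv θ) ρ|) with hF
  have key : ∀ s : ℝ, 3/4 ≤ s → s ≤ 4/3 →
      |1 - ω * s| ≤ max |1 - ω * (3/4)| |1 - ω * (4/3)| := by
    intro s h1 h2
    rcases le_total 0 ω with h | h
    · rw [max_comm]
      exact abs_le_max_abs_abs (by nlinarith) (by nlinarith)
    · exact abs_le_max_abs_abs (by nlinarith) (by nlinarith)
  have ub : ∀ v ∈ F '' TH, v ≤ max |1 - ω * (3/4)| |1 - ω * (4/3)| := by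
    rintro _ ⟨θ, hθ, rfl⟩
    obtain ⟨g1, g2⟩ := gv_bounds θ hθ
    obtain ⟨s1, s2⟩ := sigma_bounds ρ _ hρ g1 g2
    have h0 := key 1 (by norm_num) (by norm_num)
    rw [mul_one] at h0
    exact max_le h0 (max_le (key _ g1 g2) (key _ s1 s2))
  have bdd : BddAbove (F '' TH) := ⟨_, ub⟩
  have l1 : |1 - ω * (3/4)| ≤ sSup (F '' TH) := by
    refine le_trans ?_ (le_csSup bdd ⟨_, mem1, rfl⟩)
    rw [← gv1]
    exact le_trans (le_max_left _ _) (le_max_right _ _)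
  have l2 : |1 - ω * (4/3)| ≤ sSup (F '' TH) := by
    refine le_trans ?_ (le_csSup bdd ⟨_, mem2, rfl⟩)
    rw [← gv2]
    exact le_trans (le_max_left _ _) (le_max_right _ _)
  have m1 := (abs_le.mp l1).2
  have m2 := (abs_le.mp l2).1
  have lower : 7/25 ≤ sSup (F '' TH) := by linarith
  refine ⟨lower, fun h => ?_, fun h => ?_⟩
  · rw [h] at m1 m2
    linarith
  · refine le_antisymm (csSup_le ⟨_, _, mem1, rfl⟩ fun v hv => (ub v hv).trans ?_) lower
    rw [h]
    refine max_le (abs_le.mpr ?_) (abs_le.mpr ?_) <;> norm_num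
end
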